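/- Let G be an abelian group and A a commutative G-graded ring (an internal direct sum decomposition A = ⊕_{g ∈ G} A_g with A_g · A_h ⊆ A_{g+h}) in which the product of any two nonzero homogeneous elements is nonzero (A is a G-domain). Let ℓ ∈ A_g be a nonzero homogeneous element and p ≥ 1 an integer, and set A' := A[X]/(X^p − ℓ). Then for any nonzero homogeneous elements a, b ∈ A and any integers 0 ≤ i, j < p, the product of the images of aX^i and bX^j in A' is nonzero. (Consequently A' is again a graded domain for the root-construction grading.) -/

import Mathlib

open Polynomial

/-!
In `A[X]/(X ^ p - ℓ)` the product `a X ^ i * b X ^ j` equals either `a b X ^ (i + j)` or, after one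
substitution `X ^ p = ℓ`, `a b ℓ X ^ (i + j - p)`. Either way it is a monomial of degree `< p`, and
`1, X, …, X ^ (p - 1)` is a basis, so the product vanishes only if its coefficient does. Since
`a`, `b` and `ℓ` are homogeneous, neither `a b` nor `a b ℓ` vanishes in a `G`-domain.
-/

section AdjoinRoot

variable {A : Type*} [CommRing A]

theorem adjoinRoot_mk_C_mul_X_pow_ne_zero {f : A[X]} (hf : f.Monic) {c : A} (hc : c ≠ 0) {k : ℕ}
    (hk : k < f.natDegree) : AdjoinRoot.mk f (C c * X ^ k) ≠ 0 := by
  refine AdjoinRoot.mk_ne_zero_of_natDegree_lt hf ?_ ?_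
  · rwa [C_mul_X_pow_eq_monomial, Ne, monomial_eq_zero_iff]
  · rwa [natDegree_C_mul_X_pow k c hc]

theorem adjoinRoot_mk_C_mul_X_pow_add (ℓ c : A) (p k : ℕ) :
    AdjoinRoot.mk (X ^ p - C ℓ) (C c * X ^ (p + k)) =
      AdjoinRoot.mk (X ^ p - C ℓ) (C (c * ℓ) * X ^ k) := by
  refine AdjoinRoot.mk_eq_mk.mpr ⟨C c * X ^ k, ?_⟩
  rw [C_mul]
  ring

theorem root_construction_domain_general {a b ℓ : A} (h : a * b * ℓ ≠ 0) {p i j : ℕ}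
    (hi : i < p) (hj : j < p) :
    AdjoinRoot.mk (X ^ p - C ℓ) (C a * X ^ i) * AdjoinRoot.mk (X ^ p - C ℓ) (C b * X ^ j) ≠ 0 := by
  have : Nontrivial A := ⟨_, _, h⟩
  have hmonic : (X ^ p - C ℓ).Monic := monic_X_pow_sub_C ℓ (Nat.ne_zero_of_lt hi)
  have hdeg : (X ^ p - C ℓ).natDegree = p := natDegree_X_pow_sub_C
  have hprod : C a * X ^ i * (C b * X ^ j) = C (a * b) * X ^ (i + j) := by
    rw [C_mul]
    ring
  rw [← map_mul, hprod]
  obtain hlt | hle := lt_or_ge (i + j) p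
  · exact adjoinRoot_mk_C_mul_X_pow_ne_zero hmonic (left_ne_zero_of_mul h) (by rwa [hdeg])
  · obtain ⟨k, hk⟩ := Nat.exists_eq_add_of_le hle
    rw [hk, adjoinRoot_mk_C_mul_X_pow_add]
    exact adjoinRoot_mk_C_mul_X_pow_ne_zero hmonic h (by omega)

end AdjoinRoot

/-- Let `A` be a commutative `G`-graded ring which is a `G`-domain
(products of nonzero homogeneous elements are nonzero), let `ℓ ∈ A_g` be a nonzero
homogeneous element and `p ≥ 1`, and let `A' = A[X]/(X^p − ℓ)` be the root construction.
Then for nonzero homogeneous `a, b ∈ A` and `0 ≤ i, j < p`, the product of the images of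
`a X^i` and `b X^j` in `A'` is nonzero. -/
theorem root_construction_domain (G : Type*) [AddCommGroup G] [DecidableEq G]
    (A : Type*) [CommRing A] (𝒜 : G → AddSubgroup A) [GradedRing 𝒜]
    (hdom : ∀ (g h : G) (a b : A), a ∈ 𝒜 g → b ∈ 𝒜 h → a ≠ 0 → b ≠ 0 → a * b ≠ 0)
    (g : G) (ℓ : A) (hℓmem : ℓ ∈ 𝒜 g) (hℓ : ℓ ≠ 0) (p : ℕ) (hp : 1 ≤ p)
    (g₁ g₂ : G) (a b : A) (hamem : a ∈ 𝒜 g₁) (hbmem : b ∈ 𝒜 g₂)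
    (ha : a ≠ 0) (hb : b ≠ 0) (i j : ℕ) (hi : i < p) (hj : j < p) :
    (Ideal.Quotient.mk (Ideal.span {(X : A[X]) ^ p - C ℓ}) (C a * X ^ i)) *
      (Ideal.Quotient.mk (Ideal.span {(X : A[X]) ^ p - C ℓ}) (C b * X ^ j)) ≠ 0 := by
  have hab : a * b ≠ 0 := hdom g₁ g₂ a b hamem hbmem ha hb
  exact root_construction_domain_general
    (hdom (g₁ + g₂) g (a * b) ℓ (SetLike.mul_mem_graded hamem hbmem) hℓmem hab hℓ) hi hj
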